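/- Let n ≥ 1 and let T₁, T₂ be n×n integer matrices with nonzero determinant. Write V(T) ⊆ ℤⁿ for the set consisting of the zero vector together with the n columns of T. Then there exist L ∈ GL_n(ℤ) and v ∈ ℤⁿ with V(T₁) = {L·x + v : x ∈ V(T₂)} if and only if there exist L ∈ GL_n(ℤ) and R ∈ 𝔓_n with T₁ = L·T₂·Rᵀ. -/

import Mathlib

open Matrix

/-- The matrix `P_{n,i}`: the identity matrix except that every entry of its
`i`-th column equals `-1`. -/
def Pmat {n : ℕ} (i : Fin n) : Matrix (Fin n) (Fin n) ℤ :=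
  Matrix.of fun j l => if l = i then -1 else if j = l then 1 else 0

/-- The permutation matrix of the permutation `σ`. -/
def permMat {n : ℕ} (σ : Equiv.Perm (Fin n)) : Matrix (Fin n) (Fin n) ℤ :=
  Matrix.of fun j l => if j = σ l then 1 else 0

/-- `𝔓_n`: the subgroup of `GL_n(ℤ)` (the group of units of the ring of `n × n`
integer matrices) generated by the permutation matrices together with the matrices
`P_{n,1}, …, P_{n,n}`, viewed as a set of integer matrices. -/
def frakP (n : ℕ) : Set (Matrix (Fin n) (Fin n) ℤ) :=
  (fun u : (Matrix (Fin n) (Fin n) ℤ)ˣ => (u : Matrix (Fin n) (Fin n) ℤ)) ''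
    (Subgroup.closure {u : (Matrix (Fin n) (Fin n) ℤ)ˣ |
      (∃ σ : Equiv.Perm (Fin n), (u : Matrix (Fin n) (Fin n) ℤ) = permMat σ) ∨
      (∃ i : Fin n, (u : Matrix (Fin n) (Fin n) ℤ) = Pmat i)} : Set _)

/-- `V(T)`: the set consisting of the zero vector together with the `n` columns
of the matrix `T`; the vertex set of the lattice simplex `Δ(T)`. -/
def vertexSet {n : ℕ} (T : Matrix (Fin n) (Fin n) ℤ) : Set (Fin n → ℤ) :=
  insert (0 : Fin n → ℤ) (Set.range fun j => Tᵀ j)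

lemma permMat_mul_inv {n : ℕ} (σ : Equiv.Perm (Fin n)) : permMat σ * permMat σ⁻¹ = 1 := by
  ext a b
  simp only [permMat, Matrix.mul_apply, Matrix.of_apply, Matrix.one_apply]
  rw [Finset.sum_eq_single (σ⁻¹ b)]
  · simp
  · intro c _ hc
    rw [if_neg hc, mul_zero]
  · simp

lemma col_mul_permMat {n : ℕ} (T : Matrix (Fin n) (Fin n) ℤ) (σ : Equiv.Perm (Fin n))
    (j : Fin n) : (T * (permMat σ)ᵀ)ᵀ j = Tᵀ (σ⁻¹ j) := by
  ext a
  simp only [permMat, Matrix.mul_apply, Matrix.of_apply, Matrix.transpose_apply]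
  rw [Finset.sum_eq_single (σ⁻¹ j)]
  · simp
  · intro c _ hc
    have : j ≠ σ c := by
      rintro rfl
      simp at hc
    simp [this]
  · simp

lemma col_mul_Pmat {n : ℕ} (T : Matrix (Fin n) (Fin n) ℤ) (i j : Fin n) :
    (T * (Pmat i)ᵀ)ᵀ j = (if j = i then 0 else Tᵀ j) - Tᵀ i := by
  ext a
  simp only [Pmat, Matrix.mul_apply, Matrix.of_apply, Matrix.transpose_apply, Pi.sub_apply]
  have : ∀ x, T a x * (if x = i then -1 else if j = x then 1 else 0)
      = (if x = j then (if j = i then 0 else T a j) else 0) - (if x = i then T a i else 0) := by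
    intro x
    by_cases h1 : x = i <;> by_cases h2 : x = j <;> grind
  rw [Finset.sum_congr rfl (fun x _ => this x), Finset.sum_sub_distrib]
  by_cases h : j = i <;> simp [h]

lemma Pmat_mul_self {n : ℕ} (i : Fin n) : Pmat i * Pmat i = 1 := by
  have h : (1 * (Pmat i)ᵀ * (Pmat i)ᵀ)ᵀ = (1 : Matrix (Fin n) (Fin n) ℤ)ᵀ := by
    funext j
    rw [col_mul_Pmat, col_mul_Pmat, col_mul_Pmat]
    by_cases h : j = i <;> simp [h]
  simpa using h

lemma vertexSet_perm {n : ℕ} (T : Matrix (Fin n) (Fin n) ℤ) (σ : Equiv.Perm (Fin n)) :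
    vertexSet (T * (permMat σ)ᵀ) = vertexSet T := by
  unfold vertexSet
  congr 1
  simp_rw [col_mul_permMat]
  exact (σ⁻¹).surjective.range_comp (fun j => Tᵀ j)

lemma vertexSet_Pmat {n : ℕ} (T : Matrix (Fin n) (Fin n) ℤ) (i : Fin n) :
    vertexSet (T * (Pmat i)ᵀ) = (fun x => x + -(Tᵀ i)) '' vertexSet T := by
  unfold vertexSet
  simp_rw [col_mul_Pmat]
  ext x
  simp only [Set.mem_insert_iff, Set.mem_range, Set.mem_image]
  constructor
  · rintro (rfl | ⟨j, rfl⟩)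
    · exact ⟨Tᵀ i, Or.inr ⟨i, rfl⟩, by simp⟩
    · by_cases h : j = i
      · exact ⟨0, Or.inl rfl, by simp [h]⟩
      · exact ⟨Tᵀ j, Or.inr ⟨j, rfl⟩, by simp [h, sub_eq_add_neg]⟩
  · rintro ⟨y, (rfl | ⟨j, rfl⟩), rfl⟩
    · exact Or.inr ⟨i, by simp⟩
    · by_cases h : j = i
      · left; simp [h]
      · exact Or.inr ⟨j, by simp [h, sub_eq_add_neg]⟩

lemma vertexSet_mul {n : ℕ} (L T : Matrix (Fin n) (Fin n) ℤ) :
    vertexSet (L * T) = (fun x => L.mulVec x) '' vertexSet T := by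
  unfold vertexSet
  rw [Set.image_insert_eq, ← Set.range_comp, Matrix.mulVec_zero]
  rfl

lemma perm_mem {n : ℕ} (σ : Equiv.Perm (Fin n)) : permMat σ ∈ frakP n :=
  ⟨⟨permMat σ, permMat σ⁻¹, permMat_mul_inv σ, by simpa using permMat_mul_inv σ⁻¹⟩,
    Subgroup.subset_closure (Or.inl ⟨σ, rfl⟩), rfl⟩

lemma Pmat_mem {n : ℕ} (i : Fin n) : Pmat i ∈ frakP n :=
  ⟨⟨Pmat i, Pmat i, Pmat_mul_self i, Pmat_mul_self i⟩,
    Subgroup.subset_closure (Or.inr ⟨i, rfl⟩), rfl⟩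

lemma frakP_mul {n : ℕ} {A B : Matrix (Fin n) (Fin n) ℤ} (hA : A ∈ frakP n) (hB : B ∈ frakP n) :
    A * B ∈ frakP n := by
  obtain ⟨u, hu, rfl⟩ := hA
  obtain ⟨w, hw, rfl⟩ := hB
  exact ⟨u * w, mul_mem hu hw, rfl⟩

lemma frakP_translate {n : ℕ} {R : Matrix (Fin n) (Fin n) ℤ} (hR : R ∈ frakP n) :
    ∀ T : Matrix (Fin n) (Fin n) ℤ, ∃ v : Fin n → ℤ,
      vertexSet (T * Rᵀ) = (fun x => x + v) '' vertexSet T := by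
  obtain ⟨u, hu, rfl⟩ := hR
  induction hu using Subgroup.closure_induction with
  | mem u hu =>
    intro T
    rcases hu with ⟨σ, h⟩ | ⟨i, h⟩
    · exact ⟨0, by simp [h, vertexSet_perm]⟩
    · exact ⟨_, by simpa only [h] using vertexSet_Pmat T i⟩
  | one => exact fun T => ⟨0, by simp⟩
  | mul a b _ _ ha hb =>
    intro T
    obtain ⟨v, hv⟩ := hb T
    obtain ⟨w, hw⟩ := ha (T * (b : Matrix (Fin n) (Fin n) ℤ)ᵀ)
    refine ⟨v + w, ?_⟩
    simp only [Units.val_mul, Matrix.transpose_mul, ← Matrix.mul_assoc] at *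
    rw [hw, hv, Set.image_image]
    simp [add_assoc]
  | inv a _ ha =>
    intro T
    obtain ⟨v, hv⟩ := ha (T * ((a⁻¹ : (Matrix (Fin n) (Fin n) ℤ)ˣ) : Matrix (Fin n) (Fin n) ℤ)ᵀ)
    refine ⟨-v, ?_⟩
    simp only [Matrix.mul_assoc, ← Matrix.transpose_mul, Units.mul_inv, Matrix.transpose_one,
      Matrix.mul_one] at hv
    rw [hv, Set.image_image]
    simp

lemma eq_perm {n : ℕ} {A B : Matrix (Fin n) (Fin n) ℤ} (hA : A.det ≠ 0)
    (h : vertexSet A = vertexSet B) : ∃ σ, A = B * (permMat σ)ᵀ := by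
  have h1 : ∀ j, ∃ k, Bᵀ k = Aᵀ j := by
    intro j
    have hj : Aᵀ j ∈ vertexSet B := h ▸ Or.inr ⟨j, rfl⟩
    rcases hj with hj | hj
    · exact absurd (Matrix.det_eq_zero_of_column_eq_zero j (fun i => congrFun hj i)) hA
    · exact hj
  choose f hf using h1
  have hinj : Function.Injective f := by
    intro a b hab
    by_contra hne
    refine hA (Matrix.det_zero_of_column_eq hne fun k => ?_)
    have : Aᵀ a = Aᵀ b := by rw [← hf, ← hf, hab]
    exact congrFun this k
  refine ⟨(Equiv.ofBijective f (Finite.injective_iff_bijective.1 hinj))⁻¹, ?_⟩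
  rw [← Matrix.transpose_inj]
  funext j
  rw [col_mul_permMat, inv_inv]
  exact (hf j).symm

/-- The lattice simplices `Δ(T₁)` and `Δ(T₂)` are unimodularly equivalent as unordered,
unoriented simplices (some affine map `x ↦ Lx + v` with `L ∈ GL_n(ℤ)`, `v ∈ ℤⁿ` maps one
vertex set onto the other) iff `T₁ = L · T₂ · Rᵀ` for some `L ∈ GL_n(ℤ)` and `R ∈ 𝔓_n`. -/
theorem vertexSet_unimodular_iff
    (n : ℕ) (hn : 1 ≤ n) (T₁ T₂ : Matrix (Fin n) (Fin n) ℤ)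
    (h₁ : T₁.det ≠ 0) (h₂ : T₂.det ≠ 0) :
    (∃ (L : Matrix (Fin n) (Fin n) ℤ) (v : Fin n → ℤ), (L.det = 1 ∨ L.det = -1) ∧
        vertexSet T₁ = (fun x => L.mulVec x + v) '' vertexSet T₂) ↔
    (∃ L : Matrix (Fin n) (Fin n) ℤ, (L.det = 1 ∨ L.det = -1) ∧
        ∃ R ∈ frakP n, T₁ = L * T₂ * Rᵀ) := by
  constructor
  · rintro ⟨L, v, hL, h⟩
    refine ⟨L, hL, ?_⟩
    have h' : vertexSet T₁ = (fun x => x + v) '' vertexSet (L * T₂) := by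
      rw [h, vertexSet_mul, Set.image_image]
    have h0 : (0 : Fin n → ℤ) ∈ vertexSet T₁ := Or.inl rfl
    rw [h'] at h0
    obtain ⟨y, hy, hyv⟩ := h0
    have hv : v = -y := (neg_eq_of_add_eq_zero_right hyv).symm
    subst hv
    rcases hy with rfl | ⟨i, rfl⟩
    · obtain ⟨σ, hσ⟩ := eq_perm (B := L * T₂) h₁ (by simpa using h')
      exact ⟨_, perm_mem σ, hσ⟩
    · rw [← vertexSet_Pmat] at h'
      obtain ⟨σ, hσ⟩ := eq_perm h₁ h'
      exact ⟨_, frakP_mul (perm_mem σ) (Pmat_mem i), by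
        rw [Matrix.transpose_mul, ← Matrix.mul_assoc, hσ]⟩
  · rintro ⟨L, hL, R, hR, rfl⟩
    obtain ⟨v, hv⟩ := frakP_translate hR (L * T₂)
    exact ⟨L, v, hL, by rw [hv, vertexSet_mul, Set.image_image]⟩
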